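/- arXiv:2009.09751 — 2 statements merged into one kernel-verified Lean document; each statement's English description precedes it below -/
import Mathlib

section
/- Let p ∈ [1/2, 1) and for n ≥ 1 define a_n = (√n/(z_{1,1} − z_{1,0})) · log( (p/(1−p)) · (exp(z_{1,1}/√n) − 1)/(1 − exp(z_{1,0}/√n)) ) and b_n = n · log( (1−p)·exp(−z_{1,0} a_n/√n) + p·exp(−z_{1,1} a_n/√n) ), where z_{1,0} = −√(p/(1−p)) and z_{1,1} = √((1−p)/p) (for p = 1/2 these reduce to a_n = 1/2 and b_n = n·log cosh(1/(2√n))). Then for every δ > 0 there exists n₀ such that for all n ≥ n₀: 0 < a_n ≤ 1/2 and 1/8 − δ ≤ b_n ≤ 1/8. -/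
open MeasureTheory Filter

/-- The standard normal density. -/
noncomputable def normalPdf (x : ℝ) : ℝ := Real.exp (-x ^ 2 / 2) / Real.sqrt (2 * Real.pi)

/-- Binomial probabilities `f_{n,k} = (n choose k) p^k (1-p)^(n-k)`. -/
noncomputable def binProb (p : ℝ) (n k : ℕ) : ℝ := (n.choose k : ℝ) * p ^ k * (1 - p) ^ (n - k)

/-- Standardized points `z_{n,k} = (k - np)/√(np(1-p))` (also used for `k = n+1`, `k = -1`). -/
noncomputable def zpt (p : ℝ) (n : ℕ) (k : ℤ) : ℝ :=
  ((k : ℝ) - n * p) / Real.sqrt (n * p * (1 - p))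

noncomputable def z10 (p : ℝ) : ℝ := -Real.sqrt (p / (1 - p))

noncomputable def z11 (p : ℝ) : ℝ := Real.sqrt ((1 - p) / p)

/-- The coefficient `a_n` of the martingale density of the `n`-step binomial model. -/
noncomputable def aCoef (p : ℝ) (n : ℕ) : ℝ :=
  (Real.sqrt n / (z11 p - z10 p)) *
    Real.log ((p / (1 - p)) * (Real.exp (z11 p / Real.sqrt n) - 1) /
      (1 - Real.exp (z10 p / Real.sqrt n)))

/-- The coefficient `b_n` of the martingale density of the `n`-step binomial model. -/
noncomputable def bCoef (p : ℝ) (n : ℕ) : ℝ :=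
  n * Real.log ((1 - p) * Real.exp (-(z10 p) * aCoef p n / Real.sqrt n) +
    p * Real.exp (-(z11 p) * aCoef p n / Real.sqrt n))

/-!
Write `w ↦ log (sinh w / w)` as `ℓ`, and let `2h` be the distance between neighbouring points of
the standardized walk, so that one step goes up by `2(1 - p)h` or down by `2ph`. Writing every
factor `e^(2x) - 1` as `2 e^x sinh x` gives the closed forms
  `2h a_n = h + ℓ((1 - p)h) - ℓ(ph)`,  `b_n = n (ℓ(h) - (p ℓ(ph) + (1 - p) ℓ((1 - p)h)))`.
Now `ℓ` is increasing, `0 ≤ ℓ(w) ≤ w`, and `ℓ(w) - w²/6` is decreasing with values in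
`[-w⁴/72, 0]`. Replacing `ℓ(w)` by `w²/6` in the formula for `b_n` gives exactly
`n p(1 - p)h² / 2 = 1/8`.
-/

section

open Real

variable {p h x : ℝ} {n : ℕ}

lemma sinh_le_mul_cosh (hx : 0 ≤ x) : sinh x ≤ x * cosh x := by
  refine hasSum_le (fun k ↦ ?_) (hasSum_sinh x) ((hasSum_cosh x).mul_left x)
  rw [pow_succ', mul_div_assoc]
  gcongr
  exact Nat.le_succ _

lemma three_mul_mul_cosh_le (hx : 0 ≤ x) : 3 * x * cosh x ≤ (3 + x ^ 2) * sinh x := by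
  have hderiv (w : ℝ) : HasDerivAt (fun w ↦ (3 + w ^ 2) * sinh w - 3 * w * cosh w)
      (w * (w * cosh w - sinh w)) w := by
    refine (((((hasDerivAt_id' w).pow 2).const_add 3).mul (hasDerivAt_sinh w)).sub
      (((hasDerivAt_id' w).const_mul 3).mul (hasDerivAt_cosh w))).congr_deriv ?_
    simp only [Nat.cast_ofNat, Nat.add_one_sub_one, pow_one, mul_one, Pi.pow_apply]
    ring
  have hmono : MonotoneOn (fun w ↦ (3 + w ^ 2) * sinh w - 3 * w * cosh w) (Set.Ici 0) := by
    refine monotoneOn_of_hasDerivWithinAt_nonneg (convex_Ici 0)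
      (fun w _ ↦ (hderiv w).continuousAt.continuousWithinAt)
      (fun w _ ↦ (hderiv w).hasDerivWithinAt) fun w hw ↦ ?_
    have hw0 : 0 ≤ w := interior_subset hw
    exact mul_nonneg hw0 (sub_nonneg.2 (sinh_le_mul_cosh hw0))
  simpa using hmono Set.self_mem_Ici hx hx

lemma add_cube_div_six_le_sinh (hx : 0 ≤ x) : x + x ^ 3 / 6 ≤ sinh x := by
  calc x + x ^ 3 / 6 = ∑ k ∈ Finset.range 2, x ^ (2 * k + 1) / (2 * k + 1).factorial := by
        norm_num [Finset.sum_range_succ, Nat.factorial]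
    _ ≤ sinh x := sum_le_hasSum _ (fun k _ ↦ by positivity) (hasSum_sinh x)

lemma six_pow_mul_factorial_le_factorial (k : ℕ) : 6 ^ k * k.factorial ≤ (2 * k + 1).factorial := by
  induction k with
  | zero => simp
  | succ k ih =>
    calc 6 ^ (k + 1) * (k + 1).factorial = 6 * (k + 1) * (6 ^ k * k.factorial) := by
          rw [Nat.factorial_succ]; ring
      _ ≤ (2 * k + 3) * (2 * k + 2) * (2 * k + 1).factorial :=
          Nat.mul_le_mul (by nlinarith) ih
      _ = (2 * (k + 1) + 1).factorial := by
          simp only [show 2 * (k + 1) + 1 = 2 * k + 1 + 1 + 1 by ring, Nat.factorial_succ]; ring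

lemma sinh_le_mul_exp_sq_div_six (hx : 0 ≤ x) : sinh x ≤ x * exp (x ^ 2 / 6) := by
  have hexp : HasSum (fun k : ℕ ↦ (x ^ 2 / 6) ^ k / k.factorial) (exp (x ^ 2 / 6)) := by
    rw [exp_eq_exp_ℝ]
    exact NormedSpace.expSeries_div_hasSum_exp _
  refine hasSum_le (fun k ↦ ?_) (hasSum_sinh x) (hexp.mul_left x)
  rw [pow_succ', pow_mul, mul_div_assoc, div_pow, div_div]
  gcongr
  exact_mod_cast six_pow_mul_factorial_le_factorial k

lemma exp_two_mul_sub_one (x : ℝ) : exp (2 * x) - 1 = 2 * exp x * sinh x := by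
  have hinv : exp x * exp (-x) = 1 := by rw [← exp_add, add_neg_cancel, exp_zero]
  rw [sinh_eq, two_mul, exp_add]
  linear_combination hinv

lemma one_sub_exp_neg_two_mul (x : ℝ) : 1 - exp (-(2 * x)) = 2 * exp (-x) * sinh x := by
  have hneg := exp_two_mul_sub_one (-x)
  rw [sinh_neg, mul_neg] at hneg
  linear_combination -hneg

lemma exp_add_mul_sinh_add_sinh (x y : ℝ) :
    exp (x + y) * sinh x + sinh y = exp x * sinh (x + y) := by
  have hinv : exp x * exp (-x) = 1 := by rw [← exp_add, add_neg_cancel, exp_zero]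
  simp only [sinh_eq, neg_add, exp_add]
  linear_combination (exp (-y) - exp y) / 2 * hinv

/-- The logarithm of `sinh w / w`. At `w = 0` the junk value `log (0 / 0) = 0` is also the value of
the continuous extension. -/
noncomputable def logSinhc (w : ℝ) : ℝ := log (sinh w / w)

lemma sinh_div_self_pos (hx : x ≠ 0) : 0 < sinh x / x := by
  rcases hx.lt_or_gt with hneg | hpos
  · exact div_pos_of_neg_of_neg (sinh_neg_iff.2 hneg) hneg
  · exact div_pos (sinh_pos_iff.2 hpos) hpos

lemma exp_logSinhc (hx : x ≠ 0) : exp (logSinhc x) = sinh x / x :=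
  exp_log (sinh_div_self_pos hx)

lemma hasDerivAt_logSinhc (hx : x ≠ 0) :
    HasDerivAt logSinhc (cosh x / sinh x - 1 / x) x := by
  have : sinh x ≠ 0 := sinh_eq_zero.not.2 hx
  refine (((hasDerivAt_sinh x).div (hasDerivAt_id' x) hx).log
    (sinh_div_self_pos hx).ne').congr_deriv ?_
  simp only [Pi.div_apply]
  field_simp

lemma monotoneOn_logSinhc : MonotoneOn logSinhc (Set.Ioi 0) := by
  refine monotoneOn_of_hasDerivWithinAt_nonneg (convex_Ioi 0)
    (fun w hw ↦ (hasDerivAt_logSinhc (Set.mem_Ioi.1 hw).ne').continuousAt.continuousWithinAt)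
    (fun w hw ↦
      (hasDerivAt_logSinhc (Set.mem_Ioi.1 (interior_subset hw)).ne').hasDerivWithinAt)
    fun w hw ↦ ?_
  have hw0 : 0 < w := interior_subset hw
  rw [sub_nonneg, div_le_div_iff₀ hw0 (sinh_pos_iff.2 hw0), one_mul, mul_comm]
  exact sinh_le_mul_cosh hw0.le

lemma antitoneOn_logSinhc_sub_sq_div_six :
    AntitoneOn (fun w ↦ logSinhc w - w ^ 2 / 6) (Set.Ioi 0) := by
  have hderiv {w : ℝ} (hw : 0 < w) : HasDerivAt (fun w ↦ logSinhc w - w ^ 2 / 6)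
      (cosh w / sinh w - 1 / w - w / 3) w := by
    refine ((hasDerivAt_logSinhc hw.ne').sub
      (((hasDerivAt_id' w).pow 2).div_const 6)).congr_deriv ?_
    simp only [Nat.cast_ofNat, Nat.add_one_sub_one, pow_one, mul_one]
    ring
  refine antitoneOn_of_hasDerivWithinAt_nonpos (convex_Ioi 0)
    (fun w hw ↦ (hderiv hw).continuousAt.continuousWithinAt)
    (fun w hw ↦ (hderiv (interior_subset hw)).hasDerivWithinAt) fun w hw ↦ ?_
  have hw0 : 0 < w := interior_subset hw
  have : 0 < sinh w := sinh_pos_iff.2 hw0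
  have hsplit : cosh w / sinh w - 1 / w - w / 3 =
      (3 * w * cosh w - (3 + w ^ 2) * sinh w) / (3 * w * sinh w) := by
    field_simp
    ring
  rw [hsplit]
  exact div_nonpos_of_nonpos_of_nonneg (sub_nonpos.2 (three_mul_mul_cosh_le hw0.le))
    (by positivity)

lemma logSinhc_nonneg (hx : 0 < x) : 0 ≤ logSinhc x :=
  log_nonneg ((one_le_div hx).2 (self_le_sinh_iff.2 hx.le))

lemma logSinhc_le_self (hx : 0 < x) : logSinhc x ≤ x := by
  rw [logSinhc, log_le_iff_le_exp (sinh_div_self_pos hx.ne'), div_le_iff₀' hx]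
  calc sinh x ≤ x * cosh x := sinh_le_mul_cosh hx.le
    _ ≤ x * exp x := by
      gcongr
      linarith [cosh_add_sinh x, sinh_pos_iff.2 hx]

lemma logSinhc_le_sq_div_six (hx : 0 < x) : logSinhc x ≤ x ^ 2 / 6 := by
  rw [logSinhc, log_le_iff_le_exp (sinh_div_self_pos hx.ne'), div_le_iff₀' hx]
  exact sinh_le_mul_exp_sq_div_six hx.le

lemma sub_sq_div_two_le_log_one_add (hx : 0 ≤ x) : x - x ^ 2 / 2 ≤ log (1 + x) := by
  refine le_trans ?_ (le_log_one_add_of_nonneg hx)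
  rw [le_div_iff₀ (by positivity)]
  linarith [pow_nonneg hx 3, show (x - x ^ 2 / 2) * (x + 2) = 2 * x - x ^ 3 / 2 by ring]

lemma sq_div_six_sub_le_logSinhc (hx : 0 < x) : x ^ 2 / 6 - x ^ 4 / 72 ≤ logSinhc x := by
  have hsinhc : 1 + x ^ 2 / 6 ≤ sinh x / x := by
    rw [le_div_iff₀ hx]
    linarith [add_cube_div_six_le_sinh hx.le, show (1 + x ^ 2 / 6) * x = x + x ^ 3 / 6 by ring]
  calc x ^ 2 / 6 - x ^ 4 / 72 = x ^ 2 / 6 - (x ^ 2 / 6) ^ 2 / 2 := by ring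
    _ ≤ log (1 + x ^ 2 / 6) := sub_sq_div_two_le_log_one_add (by positivity)
    _ ≤ logSinhc x := log_le_log (by positivity) hsinhc

/-- The Esscher parameter of the one-step binomial model: the `θ` for which tilting the up/down
probabilities `p`, `1 - p` by `exp (-θ (ξ - p))`, with `ξ` the indicator of an up-step, makes the
price with log-increments `2(1 - p)h` and `-2ph` a martingale. -/
noncomputable def esscherParam (p h : ℝ) : ℝ :=
  log (p / (1 - p) * (exp (2 * ((1 - p) * h)) - 1) / (1 - exp (-(2 * (p * h)))))

/-- The logarithm of the Laplace transform `θ ↦ 𝔼 exp (-θ (ξ - p))` of a centered Bernoulli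
variable; it normalizes the tilted one-step measure. -/
noncomputable def bernoulliLogLaplace (p θ : ℝ) : ℝ :=
  log ((1 - p) * exp (p * θ) + p * exp (-((1 - p) * θ)))

lemma esscherParam_eq (hp0 : 0 < p) (hp1 : p < 1) (hh : 0 < h) :
    esscherParam p h = h + logSinhc ((1 - p) * h) - logSinhc (p * h) := by
  have hq0 : 0 < 1 - p := sub_pos.2 hp1
  have hup := sinh_div_self_pos (mul_pos hq0 hh).ne'
  have hdown := sinh_div_self_pos (mul_pos hp0 hh).ne'
  have : 0 < sinh (p * h) := sinh_pos_iff.2 (mul_pos hp0 hh)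
  have hexp : exp h = exp ((1 - p) * h) * exp (p * h) := by
    rw [← exp_add]; congr 1; ring
  have hratio : p / (1 - p) * (exp (2 * ((1 - p) * h)) - 1) / (1 - exp (-(2 * (p * h)))) =
      exp h * (sinh ((1 - p) * h) / ((1 - p) * h)) / (sinh (p * h) / (p * h)) := by
    rw [exp_two_mul_sub_one, one_sub_exp_neg_two_mul, exp_neg, hexp]
    field_simp
  rw [esscherParam, hratio, log_div (by positivity) hdown.ne',
    log_mul (exp_ne_zero h) hup.ne', log_exp]
  rfl

lemma esscherParam_pos (hp0 : 0 < p) (hp1 : p < 1) (hh : 0 < h) : 0 < esscherParam p h := by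
  have hup : 0 < (1 - p) * h := mul_pos (sub_pos.2 hp1) hh
  rw [esscherParam_eq hp0 hp1 hh]
  linarith [logSinhc_nonneg hup, logSinhc_le_self (mul_pos hp0 hh)]

lemma esscherParam_le (hp : 1 / 2 ≤ p) (hp1 : p < 1) (hh : 0 < h) : esscherParam p h ≤ h := by
  have hp0 : 0 < p := by linarith
  have hmono : logSinhc ((1 - p) * h) ≤ logSinhc (p * h) :=
    monotoneOn_logSinhc (mul_pos (sub_pos.2 hp1) hh) (mul_pos hp0 hh) (by gcongr; linarith)
  rw [esscherParam_eq hp0 hp1 hh]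
  linarith

lemma one_sub_mul_exp_esscherParam_add (hp0 : 0 < p) (hp1 : p < 1) (hh : 0 < h) :
    (1 - p) * exp (esscherParam p h) + p =
      exp ((1 - p) * h + logSinhc h - logSinhc (p * h)) := by
  have hq0 : 0 < 1 - p := sub_pos.2 hp1
  have : 0 < sinh (p * h) := sinh_pos_iff.2 (mul_pos hp0 hh)
  have hadd := exp_add_mul_sinh_add_sinh ((1 - p) * h) (p * h)
  rw [show (1 - p) * h + p * h = h by ring] at hadd
  rw [esscherParam_eq hp0 hp1 hh, exp_sub, exp_sub, exp_add, exp_add, exp_logSinhc hh.ne',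
    exp_logSinhc (mul_pos hp0 hh).ne', exp_logSinhc (mul_pos hq0 hh).ne']
  field_simp
  linear_combination hadd

lemma bernoulliLogLaplace_esscherParam (hp0 : 0 < p) (hp1 : p < 1) (hh : 0 < h) :
    bernoulliLogLaplace p (esscherParam p h) =
      logSinhc h - (p * logSinhc (p * h) + (1 - p) * logSinhc ((1 - p) * h)) := by
  have hfactor (θ : ℝ) : (1 - p) * exp (p * θ) + p * exp (-((1 - p) * θ)) =
      exp (-((1 - p) * θ)) * ((1 - p) * exp θ + p) := by
    rw [show p * θ = -((1 - p) * θ) + θ by ring, exp_add]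
    ring
  rw [bernoulliLogLaplace, hfactor, one_sub_mul_exp_esscherParam_add hp0 hp1 hh, ← exp_add,
    log_exp, esscherParam_eq hp0 hp1 hh]
  ring

lemma bernoulliLogLaplace_esscherParam_le (hp0 : 0 < p) (hp1 : p < 1) (hh : 0 < h) :
    bernoulliLogLaplace p (esscherParam p h) ≤ p * (1 - p) * h ^ 2 / 2 := by
  have hq0 : 0 < 1 - p := sub_pos.2 hp1
  have hdown := mul_le_mul_of_nonneg_left
    (antitoneOn_logSinhc_sub_sq_div_six (mul_pos hp0 hh) hh (by nlinarith)) hp0.le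
  have hup := mul_le_mul_of_nonneg_left
    (antitoneOn_logSinhc_sub_sq_div_six (mul_pos hq0 hh) hh (by nlinarith)) hq0.le
  rw [bernoulliLogLaplace_esscherParam hp0 hp1 hh]
  linarith

lemma le_bernoulliLogLaplace_esscherParam (hp0 : 0 < p) (hp1 : p < 1) (hh : 0 < h) :
    p * (1 - p) * h ^ 2 / 2 - h ^ 4 / 72 ≤ bernoulliLogLaplace p (esscherParam p h) := by
  have hq0 : 0 < 1 - p := sub_pos.2 hp1
  have hdown := mul_le_mul_of_nonneg_left (logSinhc_le_sq_div_six (mul_pos hp0 hh)) hp0.le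
  have hup := mul_le_mul_of_nonneg_left (logSinhc_le_sq_div_six (mul_pos hq0 hh)) hq0.le
  rw [bernoulliLogLaplace_esscherParam hp0 hp1 hh]
  linarith [sq_div_six_sub_le_logSinhc hh]

/-- Half the distance between neighbouring points `z_{n,k}` of the standardized `n`-step walk. -/
noncomputable def halfMesh (p : ℝ) (n : ℕ) : ℝ := 1 / (2 * √(n * p * (1 - p)))

lemma halfMesh_pos (hp0 : 0 < p) (hp1 : p < 1) (hn : 0 < n) : 0 < halfMesh p n := by
  have : 0 < 1 - p := sub_pos.2 hp1
  unfold halfMesh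
  positivity

lemma halfMesh_sq (hp0 : 0 < p) (hp1 : p < 1) (n : ℕ) :
    halfMesh p n ^ 2 = 1 / (4 * (n * p * (1 - p))) := by
  have : 0 < 1 - p := sub_pos.2 hp1
  rw [halfMesh, div_pow, mul_pow, sq_sqrt (by positivity)]
  norm_num

lemma sqrt_div_div_sqrt {q : ℝ} (hx : 0 ≤ x) (hp : 0 < p) (hq : 0 < q) :
    √(q / p) / √x = q / √(x * (p * q)) := by
  rw [← sqrt_div' _ hx, ← sqrt_sq (div_nonneg hq.le (sqrt_nonneg (x * (p * q)))), div_pow,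
    sq_sqrt (by positivity)]
  congr 1
  field_simp

lemma z11_div_sqrt (hp0 : 0 < p) (hp1 : p < 1) (n : ℕ) :
    z11 p / √n = 2 * ((1 - p) * halfMesh p n) := by
  rw [z11, sqrt_div_div_sqrt n.cast_nonneg hp0 (sub_pos.2 hp1), halfMesh, mul_assoc (n : ℝ)]
  ring

lemma z10_div_sqrt (hp0 : 0 < p) (hp1 : p < 1) (n : ℕ) :
    z10 p / √n = -(2 * (p * halfMesh p n)) := by
  rw [z10, neg_div, sqrt_div_div_sqrt n.cast_nonneg (sub_pos.2 hp1) hp0, halfMesh, mul_comm (1 - p),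
    mul_assoc (n : ℝ)]
  ring

lemma sqrt_div_z11_sub_z10 (hp0 : 0 < p) (hp1 : p < 1) (n : ℕ) :
    √n / (z11 p - z10 p) = 1 / (2 * halfMesh p n) := by
  rw [← inv_div, sub_div, z11_div_sqrt hp0 hp1, z10_div_sqrt hp0 hp1, ← one_div]
  ring

lemma aCoef_eq (hp0 : 0 < p) (hp1 : p < 1) (n : ℕ) :
    aCoef p n = esscherParam p (halfMesh p n) / (2 * halfMesh p n) := by
  rw [aCoef, sqrt_div_z11_sub_z10 hp0 hp1, z11_div_sqrt hp0 hp1, z10_div_sqrt hp0 hp1,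
    one_div_mul_eq_div, esscherParam]

lemma bCoef_eq (hp0 : 0 < p) (hp1 : p < 1) (hn : 0 < n) :
    bCoef p n = n * bernoulliLogLaplace p (esscherParam p (halfMesh p n)) := by
  have hh := halfMesh_pos hp0 hp1 hn
  have hdown : -z10 p * aCoef p n / √n = p * esscherParam p (halfMesh p n) := by
    rw [mul_div_right_comm, neg_div, z10_div_sqrt hp0 hp1, aCoef_eq hp0 hp1]
    field_simp
  have hup : -z11 p * aCoef p n / √n = -((1 - p) * esscherParam p (halfMesh p n)) := by
    rw [mul_div_right_comm, neg_div, z11_div_sqrt hp0 hp1, aCoef_eq hp0 hp1]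
    field_simp
  rw [bCoef, hdown, hup, bernoulliLogLaplace]

lemma aCoef_pos (hp0 : 0 < p) (hp1 : p < 1) (hn : 0 < n) : 0 < aCoef p n := by
  have hh := halfMesh_pos hp0 hp1 hn
  rw [aCoef_eq hp0 hp1]
  exact div_pos (esscherParam_pos hp0 hp1 hh) (by positivity)

lemma aCoef_le_half (hp : 1 / 2 ≤ p) (hp1 : p < 1) (hn : 0 < n) : aCoef p n ≤ 1 / 2 := by
  have hp0 : 0 < p := by linarith
  have hh := halfMesh_pos hp0 hp1 hn
  rw [aCoef_eq hp0 hp1, div_le_iff₀ (by positivity)]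
  linarith [esscherParam_le hp hp1 hh]

lemma bCoef_le_one_eighth (hp0 : 0 < p) (hp1 : p < 1) (hn : 0 < n) : bCoef p n ≤ 1 / 8 := by
  have hq0 : 0 < 1 - p := sub_pos.2 hp1
  calc bCoef p n = n * bernoulliLogLaplace p (esscherParam p (halfMesh p n)) :=
        bCoef_eq hp0 hp1 hn
    _ ≤ n * (p * (1 - p) * halfMesh p n ^ 2 / 2) := by
        gcongr
        exact bernoulliLogLaplace_esscherParam_le hp0 hp1 (halfMesh_pos hp0 hp1 hn)
    _ = 1 / 8 := by
        rw [halfMesh_sq hp0 hp1]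
        field_simp
        norm_num

lemma one_eighth_sub_le_bCoef (hp0 : 0 < p) (hp1 : p < 1) (hn : 0 < n) :
    1 / 8 - 1 / (1152 * (p * (1 - p)) ^ 2) / n ≤ bCoef p n := by
  have hq0 : 0 < 1 - p := sub_pos.2 hp1
  calc 1 / 8 - 1 / (1152 * (p * (1 - p)) ^ 2) / n
      = n * (p * (1 - p) * halfMesh p n ^ 2 / 2 - halfMesh p n ^ 4 / 72) := by
        rw [show halfMesh p n ^ 4 = (halfMesh p n ^ 2) ^ 2 by ring, halfMesh_sq hp0 hp1]
        field_simp
        ring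
    _ ≤ n * bernoulliLogLaplace p (esscherParam p (halfMesh p n)) := by
        gcongr
        exact le_bernoulliLogLaplace_esscherParam hp0 hp1 (halfMesh_pos hp0 hp1 hn)
    _ = bCoef p n := (bCoef_eq hp0 hp1 hn).symm

end

theorem aCoef_bCoef_eventual_bounds (p : ℝ) (hp : p ∈ Set.Ico (1 / 2 : ℝ) 1) :
    ∀ δ > (0 : ℝ), ∃ n₀ : ℕ, ∀ n : ℕ, n₀ ≤ n →
      0 < aCoef p n ∧ aCoef p n ≤ 1 / 2 ∧ 1 / 8 - δ ≤ bCoef p n ∧ bCoef p n ≤ 1 / 8 := by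
  intro δ hδ
  obtain ⟨hp, hp1⟩ := hp
  have hp0 : 0 < p := by linarith
  have herror : ∀ᶠ n : ℕ in atTop, 1 / (1152 * (p * (1 - p)) ^ 2) / (n : ℝ) < δ :=
    (tendsto_const_div_atTop_nhds_zero_nat _).eventually_lt_const hδ
  refine eventually_atTop.1 ?_
  filter_upwards [herror, eventually_gt_atTop 0] with n hnδ hn
  exact ⟨aCoef_pos hp0 hp1 hn, aCoef_le_half hp hp1 hn,
    by linarith [one_eighth_sub_le_bCoef hp0 hp1 hn], bCoef_le_one_eighth hp0 hp1 hn⟩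
end

section
/- Let p ∈ (1/2, 1). For every n ≥ 1 and every integer k with np ≤ k ≤ n − 1, one has log( √(np(1−p)) · f_{n,k} / φ(z_{n,k+1}) ) ≤ α(k/n)·n + β_n(k/n), where α(w) = −w·log w − (1−w)·log(1−w) + w²/(2p(1−p)) + (log(p/(1−p)) − 1/(1−p))·w + p/(2(1−p)) + log(1−p) and β_n(w) = −(1/2)·log(w(1−w)) + w/(p(1−p)) − log 2 − 1/(1−p) + (1/12 + 1/(2p(1−p)))·(1/n). -/
open MeasureTheory Filter

/-- The exponential-rate function in the binomial-vs-Gaussian comparison with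
up-probability `p`. -/
noncomputable def αAsym (p w : ℝ) : ℝ :=
  -w * Real.log w - (1 - w) * Real.log (1 - w) + w ^ 2 / (2 * p * (1 - p)) +
    (Real.log (p / (1 - p)) - 1 / (1 - p)) * w + p / (2 * (1 - p)) + Real.log (1 - p)

/-- The lower-order correction term in the binomial-vs-Gaussian comparison with
up-probability `p`. -/
noncomputable def βAsym (p : ℝ) (n : ℕ) (w : ℝ) : ℝ :=
  -(1 / 2) * Real.log (w * (1 - w)) + w / (p * (1 - p)) - Real.log 2 - 1 / (1 - p) +
    (1 / 12 + 1 / (2 * p * (1 - p))) * (1 / n)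

open Real Set
open scoped Nat Topology

/-!
Stirling's upper bound with its `1 / (12 n)` correction for `n !`, and his lower bound for `k !` and
`(n - k)!`, give with `w = k / n`
`log f_{n,k} ≤ -n D(w ‖ p) - log (2π n w (1 - w)) / 2 + 1 / (12 n)`.
Dividing by `φ (z_{n,k+1})` adds `z_{n,k+1}² / 2 = (n (w - p) + 1)² / (2 n p (1 - p))`. The leading
term of this square, together with `-n D(w ‖ p)`, is exactly `n α(w)`; the remaining terms make up
`β_n(w)`, where `-log 2` comes from `√(p (1 - p)) ≤ 1 / 2`.
-/

section Stirling

open Stirling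

lemma monotone_log_stirlingSeq_sub :
    Monotone fun n : ℕ ↦ log (stirlingSeq (n + 1)) - 1 / (12 * ((n + 1 : ℕ) : ℝ)) := by
  refine monotone_nat_of_le_succ fun n ↦ ?_
  have telescope : (1 : ℝ) / (12 * (n + 1 : ℕ) * ((n + 1 : ℕ) + 1)) =
      1 / (12 * (n + 1 : ℕ)) - 1 / (12 * (n + 1 + 1 : ℕ)) := by
    push_cast
    field_simp
    ring
  have decrement := log_stirlingSeq_sdiff_le (n + 1)
  rw [telescope] at decrement
  linarith

lemma tendsto_log_stirlingSeq_sub :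
    Tendsto (fun n : ℕ ↦ log (stirlingSeq n) - 1 / (12 * (n : ℝ))) atTop (𝓝 (log √π)) := by
  have hlog : Tendsto (fun n ↦ log (stirlingSeq n)) atTop (𝓝 (log √π)) :=
    tendsto_stirlingSeq_sqrt_pi.log (sqrt_pos.2 pi_pos).ne'
  have hinv : Tendsto (fun n : ℕ ↦ 1 / (12 * (n : ℝ))) atTop (𝓝 0) :=
    tendsto_const_nhds.div_atTop
      (tendsto_natCast_atTop_atTop.const_mul_atTop (by norm_num))
  simpa only [sub_zero] using hlog.sub hinv

lemma log_stirlingSeq_le {n : ℕ} (hn : n ≠ 0) :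
    log (stirlingSeq n) ≤ log √π + 1 / (12 * n) := by
  obtain ⟨m, rfl⟩ := Nat.exists_eq_succ_of_ne_zero hn
  exact sub_le_iff_le_add.1 <| monotone_log_stirlingSeq_sub.ge_of_tendsto
    (tendsto_log_stirlingSeq_sub.comp (tendsto_add_atTop_nat 1)) m

lemma log_factorial_le_stirling {n : ℕ} (hn : n ≠ 0) :
    log n ! ≤ n * log n - n + log n / 2 + log (2 * π) / 2 + 1 / (12 * n) := by
  have hn' : (n : ℝ) ≠ 0 := Nat.cast_ne_zero.2 hn
  have hle := log_stirlingSeq_le hn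
  rw [log_stirlingSeq_formula, log_sqrt pi_pos.le, log_mul two_ne_zero hn',
    log_div hn' (exp_ne_zero 1), log_exp] at hle
  rw [log_mul two_ne_zero pi_ne_zero]
  linarith

end Stirling

section Binomial

variable {n k : ℕ}

lemma log_choose (h : k ≤ n) : log (n.choose k) = log n ! - log k ! - log (n - k)! := by
  rw [Nat.cast_choose ℝ h, log_div (by positivity) (by positivity),
    log_mul (by positivity) (by positivity)]
  ring

lemma mul_binEntropy_div {x y : ℝ} (hx : x ≠ 0) (hy : y ≠ 0) (hxy : x ≠ y) :
    y * binEntropy (x / y) = y * log y - x * log x - (y - x) * log (y - x) := by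
  rw [binEntropy_eq_negMulLog_add_negMulLog_one_sub, negMulLog, negMulLog, one_sub_div hy,
    log_div hx hy, log_div (sub_ne_zero.2 hxy.symm) hy]
  field_simp
  ring

lemma log_choose_le (hk : 0 < k) (hkn : k < n) :
    log (n.choose k) ≤ n * binEntropy (k / n) -
      log (2 * π * (n * (k / n * (1 - k / n)))) / 2 + 1 / (12 * n) := by
  have hn : n ≠ 0 := by lia
  have hn' : (0 : ℝ) < n := by positivity
  have hk' : (0 : ℝ) < k := by positivity
  have hm' : (0 : ℝ) < n - k := sub_pos.2 (Nat.cast_lt.2 hkn)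
  have hvar : (n : ℝ) * (k / n * (1 - k / n)) = k * (n - k) / n := by
    field_simp
  have lower_sub := Stirling.le_log_factorial_stirling (Nat.sub_ne_zero_of_lt hkn)
  rw [Nat.cast_sub hkn.le] at lower_sub
  rw [log_choose hkn.le, mul_binEntropy_div hk'.ne' hn'.ne' (Nat.cast_lt.2 hkn).ne, hvar,
    log_mul (by positivity) (by positivity), log_div (by positivity) (by positivity),
    log_mul hk'.ne' hm'.ne']
  linarith [log_factorial_le_stirling hn, Stirling.le_log_factorial_stirling hk.ne']

/-- The relative entropy `D(w ‖ p)` of a Bernoulli distribution with parameter `w` with respect to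
one with parameter `p`, the exponential rate of decay of binomial probabilities. It is encoded as
cross-entropy minus entropy. -/
noncomputable def bernoulliKL (w p : ℝ) : ℝ :=
  -w * log p - (1 - w) * log (1 - p) - binEntropy w

variable {p : ℝ}

lemma binProb_pos (hp : p ∈ Ioo 0 1) (hkn : k ≤ n) : 0 < binProb p n k :=
  mul_pos (mul_pos (Nat.cast_pos.2 (Nat.choose_pos hkn)) (pow_pos hp.1 _))
    (pow_pos (sub_pos.2 hp.2) _)

lemma log_binProb (hp : p ∈ Ioo 0 1) (hkn : k ≤ n) :
    log (binProb p n k) = log (n.choose k) + k * log p + (n - k) * log (1 - p) := by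
  have hp₀ : 0 < p := hp.1
  have hq₀ : 0 < 1 - p := sub_pos.2 hp.2
  have hc : (0 : ℝ) < n.choose k := Nat.cast_pos.2 (Nat.choose_pos hkn)
  rw [binProb, log_mul (by positivity) (by positivity), log_mul hc.ne' (by positivity),
    log_pow, log_pow, Nat.cast_sub hkn]

lemma log_binProb_le (hp : p ∈ Ioo 0 1) (hk : 0 < k) (hkn : k < n) :
    log (binProb p n k) ≤ -n * bernoulliKL (k / n) p -
      log (2 * π * (n * (k / n * (1 - k / n)))) / 2 + 1 / (12 * n) := by
  have hn : (n : ℝ) ≠ 0 := Nat.cast_ne_zero.2 (by lia)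
  have hKL : -n * bernoulliKL (k / n) p =
      n * binEntropy (k / n) + k * log p + (n - k) * log (1 - p) := by
    rw [bernoulliKL]
    field_simp
    ring
  rw [log_binProb hp hkn.le, hKL]
  linarith [log_choose_le hk hkn]

end Binomial

section Gaussian

variable {p : ℝ}

lemma normalPdf_pos (x : ℝ) : 0 < normalPdf x := by
  rw [normalPdf]
  positivity

lemma log_normalPdf (x : ℝ) : log (normalPdf x) = -x ^ 2 / 2 - log (2 * π) / 2 := by
  rw [normalPdf, log_div (exp_ne_zero _) (by positivity), log_exp, log_sqrt (by positivity)]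

lemma zpt_add_one_sq_div_two {n : ℕ} (hn : n ≠ 0) (hp : p ∈ Ioo 0 1) (k : ℤ) :
    zpt p n (k + 1) ^ 2 / 2 = n * ((k / n - p) ^ 2 / (2 * p * (1 - p))) +
      (k / n - p) / (p * (1 - p)) + 1 / (2 * p * (1 - p)) * (1 / n) := by
  have hp₀ : 0 < p := hp.1
  have hq₀ : 0 < 1 - p := sub_pos.2 hp.2
  rw [zpt, div_pow, sq_sqrt (by positivity)]
  push_cast
  field_simp
  ring

end Gaussian

section Rate

variable {p : ℝ}

lemma αAsym_eq (hp₀ : p ≠ 0) (hp₁ : p ≠ 1) (w : ℝ) :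
    αAsym p w = (w - p) ^ 2 / (2 * p * (1 - p)) - bernoulliKL w p := by
  have hq₀ : 1 - p ≠ 0 := sub_ne_zero.2 hp₁.symm
  rw [αAsym, bernoulliKL, binEntropy_eq_negMulLog_add_negMulLog_one_sub, negMulLog, negMulLog,
    log_div hp₀ hq₀]
  field_simp
  ring

lemma βAsym_eq (hp₀ : p ≠ 0) (n : ℕ) (w : ℝ) :
    βAsym p n w = (w - p) / (p * (1 - p)) + 1 / (2 * p * (1 - p)) * (1 / n) -
      log (w * (1 - w)) / 2 - log 2 + 1 / (12 * n) := by
  rw [βAsym, sub_div, div_mul_cancel_left₀ hp₀]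
  ring

lemma log_mul_one_sub_le (hp : p ∈ Ioo 0 1) : log (p * (1 - p)) ≤ -2 * log 2 := by
  have hle : p * (1 - p) ≤ 2 ^ (-2 : ℤ) := by
    norm_num
    linarith [sq_nonneg (p - 1 / 2)]
  calc
    log (p * (1 - p)) ≤ log (2 ^ (-2 : ℤ)) := log_le_log (mul_pos hp.1 (sub_pos.2 hp.2)) hle
    _ = -2 * log 2 := by rw [log_zpow]; norm_num

end Rate

theorem log_ratio_bounded_by_rate_function_asymmetric_general
    {p : ℝ} (hp : p ∈ Ioo 0 1) {n k : ℕ} (hk : 0 < k) (hkn : k < n) :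
    log (√(n * p * (1 - p)) * binProb p n k / normalPdf (zpt p n (k + 1))) ≤
      αAsym p (k / n) * n + βAsym p n (k / n) := by
  have hn : n ≠ 0 := by lia
  have hn' : (0 : ℝ) < n := by positivity
  have hpq : 0 < p * (1 - p) := mul_pos hp.1 (sub_pos.2 hp.2)
  have hw : 0 < (k : ℝ) / n * (1 - k / n) :=
    mul_pos (by positivity) (sub_pos.2 ((div_lt_one hn').2 (Nat.cast_lt.2 hkn)))
  have hf := binProb_pos hp hkn.le
  have binomial_bound := log_binProb_le hp hk hkn
  have quarter_bound := log_mul_one_sub_le hp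
  have gaussian_exponent := zpt_add_one_sq_div_two hn hp k
  rw [log_mul (by positivity) (by positivity), log_mul hn'.ne' hw.ne'] at binomial_bound
  rw [mul_assoc, log_div (by positivity) (normalPdf_pos _).ne', log_mul (by positivity) hf.ne',
    log_sqrt (by positivity), log_mul hn'.ne' hpq.ne', log_normalPdf,
    αAsym_eq hp.1.ne' hp.2.ne, βAsym_eq hp.1.ne']
  push_cast at gaussian_exponent
  linarith

theorem log_ratio_bounded_by_rate_function_asymmetric
    (p : ℝ) (hp : p ∈ Set.Ioo (1 / 2 : ℝ) 1) :
    ∀ n : ℕ, 1 ≤ n → ∀ k : ℕ, (n : ℝ) * p ≤ k → k ≤ n - 1 →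
      Real.log (Real.sqrt (n * p * (1 - p)) * binProb p n k / normalPdf (zpt p n (k + 1))) ≤
        αAsym p ((k : ℝ) / n) * n + βAsym p n ((k : ℝ) / n) := by
  intro n hn k hk hkn
  have hp₀ : 0 < p := one_half_pos.trans hp.1
  have hk₀ : 0 < k := Nat.cast_pos.1 ((by positivity : (0 : ℝ) < n * p).trans_le hk)
  exact log_ratio_bounded_by_rate_function_asymmetric_general ⟨hp₀, hp.2⟩ hk₀ (by lia)
end
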